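/- Let T be a plane tree with N + 1 vertices and Łukasiewicz path W, and let 0 ≤ m ≤ N. Then W(m) = Σ_a ( min{W(r) : idx(a) + 1 ≤ r ≤ m} − W(idx(a)) ), the sum being over all strict ancestors a of the vertex u_m. -/

import Mathlib

/-!
The value `W (idx v)` counts the vertices `w` that lie to the right of `v` and whose parent lies
strictly to the left of `v` (`luka_idx`): every vertex before `v` contributes its children to a
count of pending vertices and removes itself. Since `v` lies between the parent of `w`, a
prefix of `w`, and `w` itself, this parent is a strict ancestor of `v`; so `W (idx v)` is the sum over
the strict ancestors `a` of `v` of the number of children of `a` to the right of `v`.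

It remains to see that this number is `min W - W (idx a)`, the minimum being over the indices in
`[idx a + 1, idx v]`. These are the indices of the vertices `x` with `a < x ≤ v`, all of which are
descendants of `a`. The vertices pending at such an `x` include those pending at `a` and the
children of `a` to the right of `v`, and there are no others when `x` is the child of `a` that is
an ancestor of `v` (or `v` itself).
-/

/-- A plane tree: a finite nonempty set of finite sequences of positive integers containing
the empty sequence (the root), closed under taking prefixes, and such that for every vertex
`u` there is `k_u ≥ 0` with `u ++ [i]` a vertex if and only if `1 ≤ i ≤ k_u`. -/
structure PlaneTree where
  verts : Finset (List ℕ)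
  root_mem : ([] : List ℕ) ∈ verts
  prefix_closed : ∀ u ∈ verts, ∀ v : List ℕ, v <+: u → v ∈ verts
  children_iff : ∀ u ∈ verts, ∃ k : ℕ, ∀ i : ℕ, u ++ [i] ∈ verts ↔ 1 ≤ i ∧ i ≤ k

namespace PlaneTree

/-- The number `k_u` of children of a vertex `u`: the number of vertices whose parent
(the sequence with its last entry removed) is `u`. -/
def deg (T : PlaneTree) (u : List ℕ) : ℕ :=
  (T.verts.filter fun v => v ≠ [] ∧ v.dropLast = u).card

/-- The index of a vertex `v` in the lexicographical listing `u_0 < u_1 < ⋯ < u_N` of the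
vertices: the number of vertices lexicographically smaller than `v`. -/
def idx (T : PlaneTree) (v : List ℕ) : ℕ :=
  (T.verts.filter fun w => List.Lex (· < ·) w v).card

/-- The Łukasiewicz path of a plane tree: `W 0 = 0` and `W (j+1) = W j + k_{u_j} − 1`,
where `u_0 < ⋯ < u_N` is the lexicographical listing of the vertices; equivalently,
`W j = Σ_{v : idx v < j} (k_v − 1)`. -/
def luka (T : PlaneTree) (j : ℕ) : ℤ :=
  ∑ v ∈ T.verts.filter (fun v => T.idx v < j), ((T.deg v : ℤ) - 1)

/-- The value of the Łukasiewicz path at (the index of) a vertex. -/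
def lukaV (T : PlaneTree) (v : List ℕ) : ℤ := T.luka (T.idx v)

/-- `χ_u`: the last entry of a (nonempty) vertex `u`, i.e. its position among its siblings. -/
def chi (u : List ℕ) : ℕ := u.getLastD 0

end PlaneTree

namespace PlaneTree

/-- The analogue of `List.cons_le_cons_iff` for the `≤` of Mathlib's linear order on lists, which
is not syntactically the core `≤`. -/
theorem cons_le_cons_iff {a b : ℕ} {l l' : List ℕ} :
    a :: l ≤ b :: l' ↔ a < b ∨ a = b ∧ l ≤ l' := by
  rw [← not_lt, ← not_lt (a := l'), List.cons_lt_cons_iff]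
  rcases lt_trichotomy a b with h | rfl | h
  · simp [h, h.not_gt, h.ne']
  · simp
  · simp [h, h.not_gt, h.ne']

theorem le_of_prefix {p w : List ℕ} (h : p <+: w) : p ≤ w := by
  induction p generalizing w with
  | nil => exact not_lt.1 (List.not_lt_nil _)
  | cons a p ih =>
    obtain ⟨t, rfl⟩ := h
    rw [List.cons_append, cons_le_cons_iff]
    exact Or.inr ⟨rfl, ih ⟨t, rfl⟩⟩

theorem lt_of_prefix {p w : List ℕ} (h : p <+: w) (hne : p ≠ w) : p < w :=
  lt_of_le_of_ne (le_of_prefix h) hne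

/-- The sequences extending `p` form a convex set for the lexicographical order. -/
theorem prefix_of_between {p v w : List ℕ} (h : p <+: w) (h1 : p ≤ v) (h2 : v ≤ w) :
    p <+: v := by
  induction p generalizing v w with
  | nil => exact List.nil_prefix
  | cons a p ih =>
    obtain ⟨t, rfl⟩ := h
    cases v with
    | nil => exact absurd (List.nil_lt_cons a p) (not_lt.2 h1)
    | cons b v =>
      rw [List.cons_append, cons_le_cons_iff] at h2
      rw [cons_le_cons_iff] at h1
      have hab : a = b := by omega
      subst hab
      simp only [lt_self_iff_false, true_and, false_or] at h1 h2
      exact List.cons_prefix_cons.2 ⟨rfl, ih ⟨t, rfl⟩ h1 h2⟩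

/-- A sequence after `a` that does not extend `a` comes after all sequences extending `a`. -/
theorem lt_of_not_prefix {a x w : List ℕ} (hax : a <+: x) (h : a < w) (hn : ¬ a <+: w) :
    x < w := by
  by_contra hc
  exact hn (prefix_of_between hax h.le (not_lt.1 hc))

theorem prefix_dropLast {a w : List ℕ} (h : a <+: w) (hne : a ≠ w) : a <+: w.dropLast := by
  obtain ⟨t, rfl⟩ := h
  have ht : t ≠ [] := by rintro rfl; simp at hne
  rw [List.dropLast_append_of_ne_nil ht]
  exact List.prefix_append _ _

theorem dropLast_lt {w : List ℕ} (h : w ≠ []) : w.dropLast < w := by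
  refine lt_of_prefix (List.dropLast_prefix w) fun he => ?_
  have := congrArg List.length he
  have := List.length_pos_iff.2 h
  simp at *
  omega

theorem idx_le (T : PlaneTree) {x y : List ℕ} (h : x ≤ y) : T.idx x ≤ T.idx y := by
  refine Finset.card_le_card fun w hw => ?_
  simp only [Finset.mem_filter] at hw ⊢
  exact ⟨hw.1, lt_of_lt_of_le (show w < x from hw.2) h⟩

theorem idx_lt (T : PlaneTree) {x y : List ℕ} (hx : x ∈ T.verts) (h : x < y) :
    T.idx x < T.idx y := by
  refine Finset.card_lt_card ((Finset.ssubset_iff_of_subset fun w hw => ?_).2 ⟨x, ?_, ?_⟩)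
  · simp only [Finset.mem_filter] at hw ⊢
    exact ⟨hw.1, lt_trans (show w < x from hw.2) h⟩
  · exact Finset.mem_filter.2 ⟨hx, h⟩
  · exact fun hw => lt_irrefl x (Finset.mem_filter.1 hw).2

theorem idx_lt_iff (T : PlaneTree) {x y : List ℕ} (hx : x ∈ T.verts) :
    T.idx x < T.idx y ↔ x < y :=
  ⟨fun h => by by_contra hc; exact absurd (T.idx_le (not_lt.1 hc)) (not_le.2 h), T.idx_lt hx⟩

theorem exists_idx_eq (T : PlaneTree) {v : List ℕ} (hv : v ∈ T.verts) {r : ℕ}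
    (hr : r ≤ T.idx v) : ∃ x ∈ T.verts, T.idx x = r := by
  have hlt : ∀ x ∈ T.verts, T.idx x < T.verts.card := fun x hx => by
    refine Finset.card_lt_card ((Finset.ssubset_iff_of_subset (Finset.filter_subset _ _)).2
      ⟨x, hx, fun hw => lt_irrefl x (Finset.mem_filter.1 hw).2⟩)
  have hinj : Set.InjOn T.idx T.verts := fun x hx y hy h => by
    rcases lt_trichotomy x y with h' | h' | h'
    · exact absurd h (T.idx_lt hx h').ne
    · exact h'
    · exact absurd h (T.idx_lt hy h').ne'
  have himg : T.verts.image T.idx = Finset.range T.verts.card := by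
    refine Finset.eq_of_subset_of_card_le (fun r hr => ?_) ?_
    · obtain ⟨x, hx, rfl⟩ := Finset.mem_image.1 hr
      exact Finset.mem_range.2 (hlt x hx)
    · rw [Finset.card_image_of_injOn hinj, Finset.card_range]
  have : r ∈ T.verts.image T.idx := by
    rw [himg]
    exact Finset.mem_range.2 (hr.trans_lt (hlt v hv))
  exact Finset.mem_image.1 this

/-- The vertices pending at `v`: those after `v` whose parent is before `v`. -/
def pending (T : PlaneTree) (v : List ℕ) : Finset (List ℕ) :=
  T.verts.filter fun w => w ≠ [] ∧ w.dropLast < v ∧ v < w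

/-- The children of `a` that come after `v`. -/
def childrenAfter (T : PlaneTree) (a v : List ℕ) : Finset (List ℕ) :=
  T.verts.filter fun w => w ≠ [] ∧ w.dropLast = a ∧ v < w

/-- The Łukasiewicz path at `v` counts the vertices pending at `v`. -/
theorem luka_idx (T : PlaneTree) {v : List ℕ} (hv : v ∈ T.verts) :
    T.luka (T.idx v) = (T.pending v).card := by
  have hS : T.verts.filter (fun u => T.idx u < T.idx v) = T.verts.filter (fun u => u < v) :=
    Finset.filter_congr fun u hu => T.idx_lt_iff hu
  unfold luka
  rw [hS]
  rcases eq_or_ne v [] with rfl | hne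
  · simp [pending]
  have hv0 : [] < v := lt_of_prefix List.nil_prefix hne.symm
  -- The children of the vertices before `v` are the nonroot vertices before `v`, the vertex `v`
  -- itself, and the vertices pending at `v`.
  have hsplit : (T.verts.filter fun w => w ≠ [] ∧ w.dropLast < v)
      = insert v ((T.verts.filter fun u => u < v).erase [] ∪ T.pending v) := by
    ext w
    simp only [pending, Finset.mem_filter, Finset.mem_insert, Finset.mem_union, Finset.mem_erase]
    constructor
    · rintro ⟨hw, h0, h1⟩
      rcases lt_trichotomy w v with h | h | h
      · exact Or.inr (Or.inl ⟨h0, hw, h⟩)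
      · exact Or.inl h
      · exact Or.inr (Or.inr ⟨hw, h0, h1, h⟩)
    · rintro (rfl | ⟨h0, hw, h⟩ | ⟨hw, h0, h1, -⟩)
      · exact ⟨hv, hne, dropLast_lt hne⟩
      · exact ⟨hw, h0, (dropLast_lt h0).trans h⟩
      · exact ⟨hw, h0, h1⟩
  have hdisj : Disjoint ((T.verts.filter fun u => u < v).erase []) (T.pending v) := by
    refine Finset.disjoint_left.2 fun w h1 h2 => ?_
    simp only [pending, Finset.mem_filter, Finset.mem_erase] at h1 h2
    exact lt_asymm h1.2.2 h2.2.2.2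
  have hnot : v ∉ (T.verts.filter fun u => u < v).erase [] ∪ T.pending v := by
    simp [pending]
  have hcard : ∑ u ∈ T.verts.filter (fun u => u < v), T.deg u
      = (T.verts.filter fun w => w ≠ [] ∧ w.dropLast < v).card := by
    rw [Finset.card_eq_sum_card_fiberwise (f := List.dropLast)
      (t := T.verts.filter fun u => u < v)]
    · refine Finset.sum_congr rfl fun u hu => ?_
      have hu' := (Finset.mem_filter.1 hu).2
      unfold deg
      congr 1
      ext w
      simp only [Finset.mem_filter]
      constructor
      · rintro ⟨hw, h0, rfl⟩
        exact ⟨⟨hw, h0, hu'⟩, rfl⟩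
      · rintro ⟨⟨hw, h0, -⟩, h⟩
        exact ⟨hw, h0, h⟩
    · intro w hw
      obtain ⟨hw, -, h⟩ := Finset.mem_filter.1 hw
      exact Finset.mem_coe.2 (Finset.mem_filter.2
        ⟨T.prefix_closed w hw _ (List.dropLast_prefix w), h⟩)
  have hroot : [] ∈ T.verts.filter fun u => u < v := Finset.mem_filter.2 ⟨T.root_mem, hv0⟩
  have hpos := Finset.card_pos.2 ⟨_, hroot⟩
  rw [hsplit, Finset.card_insert_of_notMem hnot, Finset.card_union_of_disjoint hdisj,
    Finset.card_erase_of_mem hroot] at hcard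
  rw [Finset.sum_sub_distrib, ← Nat.cast_sum, hcard]
  simp only [Finset.sum_const, nsmul_eq_mul, mul_one]
  omega

/-- The parent of a vertex pending at `v` is a strict ancestor of `v`, being at most `v` and a
prefix of a sequence after `v`. -/
theorem pending_card_eq_sum (T : PlaneTree) {v : List ℕ} (hv : v ∈ T.verts) :
    (T.pending v).card
      = ∑ a ∈ T.verts.filter (fun a => a <+: v ∧ a ≠ v), (T.childrenAfter a v).card := by
  rw [Finset.card_eq_sum_card_fiberwise (f := List.dropLast)
    (t := T.verts.filter (fun a => a <+: v ∧ a ≠ v))]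
  · refine Finset.sum_congr rfl fun a ha => ?_
    obtain ⟨-, hav, hne⟩ := Finset.mem_filter.1 ha
    congr 1
    ext w
    simp only [pending, childrenAfter, Finset.mem_filter]
    constructor
    · rintro ⟨⟨hw, h0, -, h1⟩, h⟩
      exact ⟨hw, h0, h, h1⟩
    · rintro ⟨hw, h0, rfl, h1⟩
      exact ⟨⟨hw, h0, lt_of_prefix hav hne, h1⟩, rfl⟩
  · intro w hw
    obtain ⟨hw, -, h1, h2⟩ := Finset.mem_filter.1 hw
    have hp := prefix_of_between (List.dropLast_prefix w) h1.le h2.le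
    exact Finset.mem_coe.2 (Finset.mem_filter.2 ⟨T.prefix_closed v hv _ hp, hp, h1.ne⟩)

theorem disjoint_pending (T : PlaneTree) (a v : List ℕ) :
    Disjoint (T.pending a) (T.childrenAfter a v) := by
  refine Finset.disjoint_left.2 fun w h1 h2 => ?_
  simp only [pending, childrenAfter, Finset.mem_filter] at h1 h2
  exact h1.2.2.1.ne h2.2.2.1

/-- The vertices pending at `a` do not extend `a`, so they remain pending at a descendant of `a`. -/
theorem pending_subset (T : PlaneTree) {a x v : List ℕ} (hax : a <+: x) (hne : a ≠ x)
    (hxv : x ≤ v) : T.pending a ∪ T.childrenAfter a v ⊆ T.pending x := by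
  intro w hw
  simp only [pending, childrenAfter, Finset.mem_filter, Finset.mem_union] at hw ⊢
  have hlt := lt_of_prefix hax hne
  rcases hw with ⟨hw, h0, h1, h2⟩ | ⟨hw, h0, rfl, h2⟩
  · refine ⟨hw, h0, h1.trans hlt, lt_of_not_prefix hax h2 fun h => ?_⟩
    exact absurd h1 (not_lt.2 (le_of_prefix (prefix_dropLast h h2.ne)))
  · exact ⟨hw, h0, hlt, hxv.trans_lt h2⟩

/-- On the path from `a` to `v`, the bound of `pending_subset` is attained at the child of `a`. -/
theorem pending_child (T : PlaneTree) {a v : List ℕ} {i : ℕ} (hc : a ++ [i] <+: v) :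
    T.pending (a ++ [i]) = T.pending a ∪ T.childrenAfter a v := by
  refine Finset.Subset.antisymm (fun w hw => ?_)
    (T.pending_subset (List.prefix_append _ _) (by simp) (le_of_prefix hc))
  simp only [pending, childrenAfter, Finset.mem_filter, Finset.mem_union] at hw ⊢
  obtain ⟨hw, h0, h1, h2⟩ := hw
  have hac : a < a ++ [i] := lt_of_prefix (List.prefix_append _ _) (by simp)
  have hp : w.dropLast <+: a := by
    have := prefix_dropLast (prefix_of_between (List.dropLast_prefix w) h1.le h2.le) h1.ne
    simpa using this
  rcases eq_or_ne w.dropLast a with h | h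
  · refine Or.inr ⟨hw, h0, h, lt_of_not_prefix hc h2 fun h' => ?_⟩
    have := (prefix_dropLast h' h2.ne).length_le
    rw [h] at this
    simp at this
  · exact Or.inl ⟨hw, h0, lt_of_prefix hp h, hac.trans h2⟩

/-- The minimum of `W` on `[idx a + 1, idx v]` exceeds `W (idx a)` by the number of children of
`a` after `v`. -/
theorem isLeast_luka (T : PlaneTree) {a v : List ℕ} (hv : v ∈ T.verts) (hav : a <+: v)
    (hne : a ≠ v) :
    IsLeast {w : ℤ | ∃ r : ℕ, T.idx a + 1 ≤ r ∧ r ≤ T.idx v ∧ w = T.luka r}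
      (T.luka (T.idx a) + (T.childrenAfter a v).card) := by
  have ha := T.prefix_closed v hv a hav
  rw [T.luka_idx ha, ← Nat.cast_add, ← Finset.card_union_of_disjoint (T.disjoint_pending a v)]
  constructor
  · obtain ⟨t, rfl⟩ := hav
    obtain _ | ⟨i, t⟩ := t
    · simp at hne
    have hc : a ++ [i] <+: a ++ i :: t := ⟨t, by simp⟩
    refine ⟨T.idx (a ++ [i]), T.idx_lt ha ?_, T.idx_le (le_of_prefix hc), ?_⟩
    · exact lt_of_prefix (List.prefix_append _ _) (by simp)
    · rw [T.luka_idx (T.prefix_closed _ hv _ hc), T.pending_child hc]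
  · rintro _ ⟨r, h1, h2, rfl⟩
    obtain ⟨x, hx, rfl⟩ := T.exists_idx_eq hv h2
    have hax : a < x := (T.idx_lt_iff ha).1 h1
    have hxv : x ≤ v := not_lt.1 fun h => absurd (T.idx_lt hv h) (not_lt.2 h2)
    rw [T.luka_idx hx]
    exact_mod_cast Finset.card_le_card
      (T.pending_subset (prefix_of_between hav hax.le hxv) hax.ne hxv)

end PlaneTree

/-- Let `T` be a plane tree with Łukasiewicz path `W` and let `u_m` (here `v`) be any vertex,
`m = idx v`. Then `W m = Σ_a (min{W r : idx a + 1 ≤ r ≤ m} − W (idx a))`, the sum being over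
all strict ancestors `a` of `v`. -/
theorem luka_eq_sum_over_ancestors (T : PlaneTree) (v : List ℕ) (hv : v ∈ T.verts) :
    T.luka (T.idx v) = ∑ a ∈ T.verts.filter (fun a => a <+: v ∧ a ≠ v),
      (sInf {w : ℤ | ∃ r : ℕ, T.idx a + 1 ≤ r ∧ r ≤ T.idx v ∧ w = T.luka r}
        - T.luka (T.idx a)) := by
  rw [T.luka_idx hv, T.pending_card_eq_sum hv, Nat.cast_sum]
  refine Finset.sum_congr rfl fun a ha => ?_
  obtain ⟨-, hav, hne⟩ := Finset.mem_filter.1 ha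
  rw [(T.isLeast_luka hv hav hne).csInf_eq, add_sub_cancel_left]
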